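/- Let W be a finite string over {A, X, B} which does not both start with the letter A and end with the letter A. Then |(WX)| + 2|(WB)| − |W| = 0, where |(·)| denotes the cyclic value and |W| the open value in the tight puzzle. -/

import Mathlib

/-!
The "tight puzzle" of Schwartz–Tabachnikov.  Strings over the alphabet `{A, X, B}`;
word list (coefficient, weight): `X (1,0)`, `XA (1,1)`, `XAA (1,1)`, `AXA (2,1)`,
`AAA (-1,1)`, `BA (-1,1)`, `ABA (-1,1)`, `XXA (-1,1)`; in a parsing the word `X` may
never be immediately followed by the word `XA` or the word `BA`.
-/

open scoped Classical

/-- The three-letter alphabet. -/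
inductive PLetter | A | X | B
deriving DecidableEq

/-- Strings over the alphabet. -/
abbrev PWord := List PLetter

/-- The tight puzzle word list. -/
def tightWords : List PWord :=
  [[PLetter.X], [PLetter.X, PLetter.A], [PLetter.X, PLetter.A, PLetter.A],
   [PLetter.A, PLetter.X, PLetter.A], [PLetter.A, PLetter.A, PLetter.A],
   [PLetter.B, PLetter.A], [PLetter.A, PLetter.B, PLetter.A],
   [PLetter.X, PLetter.X, PLetter.A]]

/-- Coefficients of the words of the tight puzzle (`AXA ↦ 2`; `AAA, BA, ABA, XXA ↦ -1`;
`X, XA, XAA ↦ 1`). -/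
def tightCoeff (w : PWord) : ℤ :=
  if w = [PLetter.A, PLetter.X, PLetter.A] then 2
  else if w = [PLetter.A, PLetter.A, PLetter.A] ∨ w = [PLetter.B, PLetter.A] ∨
      w = [PLetter.A, PLetter.B, PLetter.A] ∨ w = [PLetter.X, PLetter.X, PLetter.A] then -1
  else 1

/-- Weights of the words: the word `X` has weight `0`, all other words weight `1`. -/
def wordWt (w : PWord) : ℕ := if w = [PLetter.X] then 0 else 1

/-- The forbidden adjacency: the word `X` immediately followed by `XA` or `BA`. -/
def Bad (u v : PWord) : Prop :=
  u = [PLetter.X] ∧ (v = [PLetter.X, PLetter.A] ∨ v = [PLetter.B, PLetter.A])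

/-- The contribution `coefficient · t^weight ∈ ℤ[t]` of a parsing `L`. -/
noncomputable def parseVal (c : PWord → ℤ) (L : List PWord) : Polynomial ℤ :=
  Polynomial.C ((L.map c).prod) * Polynomial.X ^ ((L.map wordWt).sum)

/-- `L` is a parsing in the tight puzzle: all its words are on the word list and the
forbidden adjacency never occurs. -/
def TightChain (L : List PWord) : Prop :=
  (∀ w ∈ L, w ∈ tightWords) ∧ List.Chain' (fun u v => ¬ Bad u v) L

/-- The *core* of a string: what remains after deleting all leading and trailing `X`s. -/
def core (s : PWord) : PWord :=
  ((s.dropWhile (· == PLetter.X)).reverse.dropWhile (· == PLetter.X)).reverse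

/-- `L` is a parsing of the bi-infinite string `⋯XX·W·XX⋯` (with the infinitely many
padding `X`s parsed as copies of the word `X` and trimmed away): the words of `L`
concatenate to `W` up to padding by `X`s on either side, `L` neither starts nor ends
with the word `X`, and (because of the padding `X`-words on the left) the first word
of `L` is not `XA` or `BA`. -/
def IsOpenParsing (W : PWord) (L : List PWord) : Prop :=
  TightChain L ∧ core L.flatten = core W ∧
  ∀ h : L ≠ [],
    L.head h ≠ [PLetter.X] ∧ L.head h ≠ [PLetter.X, PLetter.A] ∧
    L.head h ≠ [PLetter.B, PLetter.A] ∧ L.getLast h ≠ [PLetter.X]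

/-- `(r, L)` is a parsing of the cyclic string `(W)`: reading the necklace of the
letters of `W` starting at position `r`, the words of `L` concatenate to it, the
forbidden adjacency does not occur (cyclically), and `r < (last word).length`
(so that every parsing of the necklace is counted exactly once). -/
def IsCyclicParsing (W : PWord) (r : ℕ) (L : List PWord) : Prop :=
  TightChain L ∧
  ∃ h : L ≠ [], L.flatten = W.rotate r ∧ r < (L.getLast h).length ∧
    ¬ Bad (L.getLast h) (L.head h)

/-- `L` is a parsing of the locked string `[W]`: the words of `L` concatenate exactly
to `W`, no padding allowed. -/
def IsLockedParsing (W : PWord) (L : List PWord) : Prop :=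
  TightChain L ∧ L.flatten = W

/-- The nine words of both puzzles, as a function (used to enumerate parsings). -/
def wordOf : Fin 9 → PWord :=
  ![[PLetter.X], [PLetter.X, PLetter.A], [PLetter.X, PLetter.A, PLetter.A],
    [PLetter.X, PLetter.B, PLetter.A], [PLetter.A, PLetter.X, PLetter.A],
    [PLetter.A, PLetter.A, PLetter.A], [PLetter.B, PLetter.A],
    [PLetter.A, PLetter.B, PLetter.A], [PLetter.X, PLetter.X, PLetter.A]]

/-- The open value `|W| ∈ ℤ[t]`: the sum of `coefficient · t^weight` over all parsings
of the bi-infinite string `⋯XX·W·XX⋯` (any such parsing consists of at most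
`W.length + 2` words). -/
noncomputable def openVal (W : PWord) : Polynomial ℤ :=
  ∑ k ∈ Finset.range (W.length + 3), ∑ f : Fin k → Fin 9,
    if IsOpenParsing W ((List.ofFn f).map wordOf) then
      parseVal tightCoeff ((List.ofFn f).map wordOf)
    else 0

/-- The cyclic value `|(W)| ∈ ℤ[t]`: the sum of `coefficient · t^weight` over all
parsings of the cyclic string `(W)`. -/
noncomputable def cycVal (W : PWord) : Polynomial ℤ :=
  ∑ r ∈ Finset.range W.length, ∑ k ∈ Finset.range (W.length + 1), ∑ f : Fin k → Fin 9,
    if IsCyclicParsing W r ((List.ofFn f).map wordOf) then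
      parseVal tightCoeff ((List.ofFn f).map wordOf)
    else 0

/-- The locked value `|[W]| ∈ ℤ[t]`: the sum of `coefficient · t^weight` over all
parsings whose concatenation is exactly `W`. -/
noncomputable def lockVal (W : PWord) : Polynomial ℤ :=
  ∑ k ∈ Finset.range (W.length + 1), ∑ f : Fin k → Fin 9,
    if IsLockedParsing W ((List.ofFn f).map wordOf) then
      parseVal tightCoeff ((List.ofFn f).map wordOf)
    else 0

/-!
Removing from a parsing of the cyclic string `(W y)` the word that covers the last letter, say
`s ++ y :: p`, leaves a linear parsing of `W` without its prefix `p` and its suffix `s`. In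
`|(WX)| + 2|(WB)|` the contributions of `AXA` and `ABA` then cancel. Those of `XA` and `BA` combine
to `-t` times the parsings of `W` without a prefix `A` that do not end with the word `X`, and those
of `XXA` whose second letter is the last one of `(WX)` supply the parsings that do end with it.
Reading words from the left, one recognizes what remains as the value of the parsings of `XXW` that
may follow the word `X`. No word has more than two leading letters `X`, and only the word `X` ends
with this letter, so padding further adds nothing but words `X`: the value is `|W|`.
-/

namespace TightPuzzle

section Words

theorem ne_nil_of_mem_tightWords : ∀ w ∈ tightWords, w ≠ [] := by decide

theorem getLast?_of_mem_tightWords : ∀ w ∈ tightWords, w ≠ [.X] → w.getLast? = some .A := by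
  decide

theorem exists_wordOf_eq : ∀ w ∈ tightWords, ∃ i, wordOf i = w := by decide

theorem wordOf_injective : Function.Injective wordOf := by decide

theorem exists_map_wordOf_eq {L : List PWord} (hL : ∀ w ∈ L, w ∈ tightWords) :
    ∃ M : List (Fin 9), M.map wordOf = L := by
  have hrange : L ∈ Set.range (List.map wordOf) := by
    rw [Set.range_list_map]
    exact fun w hw => exists_wordOf_eq w (hL w hw)
  exact hrange

theorem length_le_length_flatten {α : Type*} {L : List (List α)} (hL : ∀ w ∈ L, w ≠ []) :
    L.length ≤ L.flatten.length := by
  rw [List.length_flatten, ← List.length_map List.length]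
  refine List.length_le_sum_of_one_le _ fun i hi => ?_
  obtain ⟨w, hw, rfl⟩ := List.mem_map.1 hi
  exact List.length_pos_of_ne_nil (hL w hw)

theorem finite_setOf_length_flatten_le (n : ℕ) :
    {L : List PWord | (∀ w ∈ L, w ∈ tightWords) ∧ L.flatten.length ≤ n}.Finite := by
  refine ((List.finite_length_le (Fin 9) n).image (List.map wordOf)).subset ?_
  rintro L ⟨hL, hn⟩
  obtain ⟨M, rfl⟩ := exists_map_wordOf_eq hL
  have hlen := length_le_length_flatten fun w hw => ne_nil_of_mem_tightWords w (hL w hw)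
  rw [List.length_map] at hlen
  exact ⟨M, hlen.trans hn, rfl⟩

theorem getLast?_flatten_eq_X_iff {L : List PWord} (hL : ∀ w ∈ L, w ∈ tightWords) :
    L.flatten.getLast? = some .X ↔ L.getLast? = some [.X] := by
  rcases L.eq_nil_or_concat' with rfl | ⟨M, w, rfl⟩
  · simp
  by_cases hw : w = [.X]
  · simp [hw]
  · simp [getLast?_of_mem_tightWords w (hL w (by simp)) hw, hw]

end Words

section Sums

theorem sum_ite_eq_finsum_mem {R : Type*} [AddCommMonoid R] (F : List PWord → R)
    {P : List PWord → Prop} {n : ℕ}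
    (hP : ∀ L, P L → (∀ w ∈ L, w ∈ tightWords) ∧ L.length < n) :
    (∑ k ∈ Finset.range n, ∑ f : Fin k → Fin 9,
      if P ((List.ofFn f).map wordOf) then F ((List.ofFn f).map wordOf) else 0) =
      ∑ᶠ L ∈ {L | P L}, F L := by
  rw [Finset.sum_sigma', ← Finset.sum_filter, ← finsum_mem_coe_finset]
  refine finsum_mem_eq_of_bijOn (fun x => (List.ofFn x.2).map wordOf) ⟨?_, ?_, ?_⟩ fun _ _ => rfl
  · intro x hx
    exact (Finset.mem_filter.1 hx).2
  · intro x _ y _ hxy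
    exact List.equivSigmaTuple.symm.injective (List.map_injective_iff.2 wordOf_injective hxy)
  · intro L hL
    obtain ⟨hw, hn⟩ := hP L hL
    obtain ⟨M, rfl⟩ := exists_map_wordOf_eq hw
    have hM : (List.ofFn M.get).map wordOf = M.map wordOf := by rw [List.ofFn_get]
    refine ⟨⟨M.length, M.get⟩, ?_, hM⟩
    refine Finset.mem_filter.2 ⟨by simpa using hn, ?_⟩
    rwa [hM]

theorem parseVal_append (c : PWord → ℤ) (L M : List PWord) :
    parseVal c (L ++ M) = parseVal c L * parseVal c M := by
  simp only [parseVal, List.map_append, List.prod_append, List.sum_append, map_mul, pow_add]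
  ring

theorem parseVal_X : parseVal tightCoeff [[.X]] = 1 := by
  simp [parseVal, tightCoeff, wordWt]

theorem parseVal_replicate_X (k : ℕ) : parseVal tightCoeff (List.replicate k [.X]) = 1 := by
  simp [parseVal, tightCoeff, wordWt]

/-- The sum of `coefficient · t^weight` over a set of parsings; meaningful for finite sets, as
`finsum` vanishes when infinitely many terms are nonzero. -/
noncomputable def setVal (S : Set (List PWord)) : Polynomial ℤ :=
  ∑ᶠ L ∈ S, parseVal tightCoeff L

theorem setVal_empty : setVal ∅ = 0 := finsum_mem_empty

theorem setVal_union {S T : Set (List PWord)} (hd : Disjoint S T) (hS : S.Finite)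
    (hT : T.Finite) : setVal (S ∪ T) = setVal S + setVal T :=
  finsum_mem_union hd hS hT

theorem sum_setVal {ι : Type*} (s : Finset ι) {S : ι → Set (List PWord)}
    (hS : ∀ i, (S i).Finite) :
    ∑ i ∈ s, setVal (S i) =
      ∑ᶠ x ∈ {x : ι × List PWord | x.1 ∈ s ∧ x.2 ∈ S x.1}, parseVal tightCoeff x.2 := by
  simp only [setVal, finsum_mem_eq_finite_toFinset_sum _ (hS _)]
  rw [Finset.sum_sigma', ← finsum_mem_coe_finset]
  refine finsum_mem_eq_of_bijOn (Equiv.sigmaEquivProd _ _) ⟨?_, ?_, ?_⟩ fun _ _ => rfl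
  · intro x hx
    simpa using hx
  · exact (Equiv.sigmaEquivProd _ _).injective.injOn
  · intro x hx
    exact ⟨⟨x.1, x.2⟩, by simpa using hx, rfl⟩

theorem setVal_image_cons (w : PWord) {S : Set (List PWord)} (hS : S.Finite) :
    setVal ((w :: ·) '' S) = parseVal tightCoeff [w] * setVal S := by
  rw [setVal, finsum_mem_image List.cons_injective.injOn, setVal, mul_finsum_mem' _ _ hS]
  simp only [← parseVal_append, List.singleton_append]

theorem setVal_image_concat (w : PWord) {S : Set (List PWord)} (hS : S.Finite) :
    setVal ((· ++ [w]) '' S) = parseVal tightCoeff [w] * setVal S := by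
  rw [setVal, finsum_mem_image (List.append_left_injective [w]).injOn, setVal,
    mul_finsum_mem' _ _ hS]
  simp only [parseVal_append, mul_comm]

end Sums

section Chains

theorem tightChain_iff {L : List PWord} :
    TightChain L ↔ (∀ w ∈ L, w ∈ tightWords) ∧ L.IsChain fun u v => ¬ Bad u v :=
  Iff.rfl

theorem tightChain_append {L M : List PWord} :
    TightChain (L ++ M) ↔ TightChain L ∧ TightChain M ∧
      ∀ u ∈ L.getLast?, ∀ v ∈ M.head?, ¬ Bad u v := by
  simp only [tightChain_iff, List.isChain_append, List.forall_mem_append]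
  tauto

theorem tightChain_cons {w : PWord} {L : List PWord} :
    TightChain (w :: L) ↔ w ∈ tightWords ∧ (∀ v ∈ L.head?, ¬ Bad w v) ∧ TightChain L := by
  simp only [tightChain_iff, List.isChain_cons, List.forall_mem_cons]
  tauto

theorem tightChain_concat {L : List PWord} {w : PWord} :
    TightChain (L ++ [w]) ↔ TightChain L ∧ w ∈ tightWords ∧ ∀ u ∈ L.getLast?, ¬ Bad u w := by
  rw [tightChain_append]
  simp [tightChain_iff]

theorem tightChain_cons_iff_of_ne {w : PWord} (hw : w ∈ tightWords) (hX : w ≠ [.X])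
    (L : List PWord) : TightChain (w :: L) ↔ TightChain L := by
  simp [tightChain_cons, hw, Bad, hX]

theorem tightChain_concat_iff_of_not_bad {w : PWord} (hw : w ∈ tightWords)
    (hbad : ∀ u, ¬ Bad u w) (L : List PWord) : TightChain (L ++ [w]) ↔ TightChain L := by
  simp [tightChain_concat, hw, hbad]

theorem not_bad_X (u : PWord) : ¬ Bad u [.X] := by simp [Bad]

theorem tightChain_X_replicate_append (k : ℕ) (L : List PWord) :
    TightChain ([.X] :: (List.replicate k [.X] ++ L)) ↔ TightChain ([.X] :: L) := by
  have hX : [PLetter.X] ∈ tightWords := by decide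
  induction k with
  | zero => simp
  | succ k ih =>
    rw [List.replicate_succ, List.cons_append, tightChain_cons]
    simp [hX, not_bad_X, ih]

end Chains

section Gaps

/-- The parsings of the string that remains of `W` when a prefix `p` and a suffix `s` are
removed, which may be put between the words `l` and the words `r` without creating a forbidden
adjacency. There are none if `W` does not have this prefix and suffix. -/
def gapParsings (l r : List PWord) (p s W : PWord) : Set (List PWord) :=
  {M | TightChain (l ++ M ++ r) ∧ p ++ M.flatten ++ s = W}

/-- The total value of the parsings in `gapParsings l r p s W`. -/
noncomputable def gapVal (l r : List PWord) (p s W : PWord) : Polynomial ℤ :=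
  setVal (gapParsings l r p s W)

theorem mem_gapParsings {l r M : List PWord} {p s W : PWord} :
    M ∈ gapParsings l r p s W ↔ TightChain (l ++ M ++ r) ∧ p ++ M.flatten ++ s = W :=
  Iff.rfl

theorem gapParsings_finite (l r : List PWord) (p s W : PWord) :
    (gapParsings l r p s W).Finite := by
  refine (finite_setOf_length_flatten_le W.length).subset ?_
  rintro M ⟨hM, rfl⟩
  refine ⟨fun w hw => hM.1 w (by simp [hw]), ?_⟩
  simp only [List.length_append]
  lia

theorem gapVal_cons_cons (l r : List PWord) (y : PLetter) (p s W : PWord) :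
    gapVal l r (y :: p) s (y :: W) = gapVal l r p s W := by
  simp [gapVal, gapParsings]

theorem gapVal_cons_cons_of_ne {y z : PLetter} (h : y ≠ z) (l r : List PWord) (p s W : PWord) :
    gapVal l r (y :: p) s (z :: W) = 0 := by
  simp [gapVal, gapParsings, h, setVal_empty]

theorem gapVal_left_eq_nil {w : PWord} (hw : w ∈ tightWords) (hX : w ≠ [.X]) (r : List PWord)
    (p s W : PWord) : gapVal [w] r p s W = gapVal [] r p s W := by
  simp [gapVal, gapParsings, tightChain_cons_iff_of_ne hw hX]

theorem gapVal_right_eq_nil {w : PWord} (hw : w ∈ tightWords) (hbad : ∀ u, ¬ Bad u w)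
    (l : List PWord) (p s W : PWord) : gapVal l [w] p s W = gapVal l [] p s W := by
  simp [gapVal, gapParsings, tightChain_concat_iff_of_not_bad hw hbad, -List.append_assoc]

theorem gapVal_right_BA (l : List PWord) (p s W : PWord) :
    gapVal l [[.B, .A]] p s W = gapVal l [[.X, .A]] p s W := by
  have hXA : [PLetter.X, PLetter.A] ∈ tightWords := by decide
  have hBA : [PLetter.B, PLetter.A] ∈ tightWords := by decide
  simp [gapVal, gapParsings, tightChain_concat, Bad, hXA, hBA, -List.append_assoc]

theorem mem_gapParsings_right_XA_iff {p s W : PWord} {M : List PWord} :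
    M ∈ gapParsings [] [[.X, .A]] p s W ↔
      M ∈ gapParsings [] [] p s W ∧ M.getLast? ≠ some [.X] := by
  have hXA : [PLetter.X, PLetter.A] ∈ tightWords := by decide
  simp only [mem_gapParsings, List.nil_append, List.append_nil, tightChain_concat, hXA, Bad,
    Option.mem_def, Ne, true_and]
  exact ⟨fun h => ⟨⟨h.1.1, h.2⟩, fun hlast => h.1.2 _ hlast ⟨rfl, Or.inl trivial⟩⟩,
    fun h => ⟨⟨h.1.1, fun u hu hbad => h.2 (hbad.1 ▸ hu)⟩, h.1.2⟩⟩

theorem concat_X_mem_gapParsings_iff {l M : List PWord} {p s W : PWord} :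
    M ++ [[.X]] ∈ gapParsings l [] p s W ↔ M ∈ gapParsings l [] p (.X :: s) W := by
  have hX : [PLetter.X] ∈ tightWords := by decide
  simp only [mem_gapParsings, List.append_nil, ← List.append_assoc,
    tightChain_concat_iff_of_not_bad hX not_bad_X]
  simp

theorem gapParsings_nil_nil (p s W : PWord) :
    gapParsings [] [] p s W = gapParsings [] [[.X, .A]] p s W ∪
      (· ++ [[.X]]) '' gapParsings [] [] p (.X :: s) W := by
  ext M
  rw [Set.mem_union, mem_gapParsings_right_XA_iff, Set.mem_image]
  constructor
  · intro hM
    by_cases hlast : M.getLast? = some [.X]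
    · obtain ⟨N, rfl⟩ := List.getLast?_eq_some_iff.1 hlast
      exact Or.inr ⟨N, concat_X_mem_gapParsings_iff.1 hM, rfl⟩
    · exact Or.inl ⟨hM, hlast⟩
  · rintro (⟨hM, -⟩ | ⟨N, hN, rfl⟩)
    · exact hM
    · exact concat_X_mem_gapParsings_iff.2 hN

theorem gapVal_nil_nil (p s W : PWord) :
    gapVal [] [] p s W = gapVal [] [[.X, .A]] p s W + gapVal [] [] p (.X :: s) W := by
  have hd : Disjoint (gapParsings [] [[.X, .A]] p s W)
      ((· ++ [[.X]]) '' gapParsings [] [] p (.X :: s) W) := by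
    rw [Set.disjoint_left]
    rintro _ hM ⟨N, -, rfl⟩
    exact (mem_gapParsings_right_XA_iff.1 hM).2 List.getLast?_concat
  rw [gapVal, gapParsings_nil_nil, setVal_union hd (gapParsings_finite _ _ _ _ _)
    ((gapParsings_finite _ _ _ _ _).image _), setVal_image_concat _ (gapParsings_finite _ _ _ _ _),
    parseVal_X, one_mul, gapVal, gapVal]

end Gaps

section AfterX

/-- The value of the parsings of `W` which may follow the word `X`. -/
noncomputable def afterXVal (W : PWord) : Polynomial ℤ :=
  gapVal [[.X]] [] [] [] W

theorem mem_gapParsings_afterX {W : PWord} {L : List PWord} :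
    L ∈ gapParsings [[.X]] [] [] [] W ↔ TightChain ([.X] :: L) ∧ L.flatten = W := by
  simp [mem_gapParsings]

theorem eq_of_not_bad_X {w : PWord} (hw : w ∈ tightWords) (hhead : w.head? = some .X)
    (hbad : ¬ Bad [.X] w) : w = [.X] ∨ w = [.X, .A, .A] ∨ w = [.X, .X, .A] := by
  simp only [Bad, true_and] at hbad
  decide +revert

theorem gapParsings_afterX_cons_X (W : PWord) :
    gapParsings [[.X]] [] [] [] (.X :: W) =
      ([.X] :: ·) '' gapParsings [[.X]] [] [] [] W ∪
        (([.X, .A, .A] :: ·) '' gapParsings [] [] [.A, .A] [] W ∪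
          ([.X, .X, .A] :: ·) '' gapParsings [] [] [.X, .A] [] W) := by
  have hX : [PLetter.X] ∈ tightWords := by decide
  have hXAA : [PLetter.X, PLetter.A, PLetter.A] ∈ tightWords := by decide
  have hXXA : [PLetter.X, PLetter.X, PLetter.A] ∈ tightWords := by decide
  ext L
  simp only [Set.mem_union, Set.mem_image, mem_gapParsings, List.singleton_append, List.nil_append,
    List.append_nil]
  constructor
  · rintro ⟨hL, hflat⟩
    cases L with
    | nil => simp at hflat
    | cons w M =>
      rw [tightChain_cons] at hL
      have hw := hL.2.2.1 w (by simp)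
      have hhead : w.head? = some .X := by
        obtain ⟨y, v, rfl⟩ := List.exists_cons_of_ne_nil (ne_nil_of_mem_tightWords w hw)
        simp_all
      rcases eq_of_not_bad_X hw hhead (hL.2.1 w rfl) with rfl | rfl | rfl
      · exact Or.inl ⟨M, ⟨hL.2.2, by simpa using hflat⟩, rfl⟩
      · rw [tightChain_cons_iff_of_ne hXAA (by simp)] at hL
        exact Or.inr (Or.inl ⟨M, ⟨hL.2.2, by simpa using hflat⟩, rfl⟩)
      · rw [tightChain_cons_iff_of_ne hXXA (by simp)] at hL
        exact Or.inr (Or.inr ⟨M, ⟨hL.2.2, by simpa using hflat⟩, rfl⟩)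
  · rintro (⟨M, ⟨hM, rfl⟩, rfl⟩ | ⟨M, ⟨hM, rfl⟩, rfl⟩ | ⟨M, ⟨hM, rfl⟩, rfl⟩)
    · exact ⟨tightChain_cons.2 ⟨hX, by simp [Bad], hM⟩, rfl⟩
    · rw [← tightChain_cons_iff_of_ne hXAA (by simp)] at hM
      exact ⟨tightChain_cons.2 ⟨hX, by simp [Bad], hM⟩, rfl⟩
    · rw [← tightChain_cons_iff_of_ne hXXA (by simp)] at hM
      exact ⟨tightChain_cons.2 ⟨hX, by simp [Bad], hM⟩, rfl⟩

theorem afterXVal_cons_X (W : PWord) :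
    afterXVal (.X :: W) = afterXVal W + Polynomial.X * gapVal [] [] [.A, .A] [] W -
      Polynomial.X * gapVal [] [] [.X, .A] [] W := by
  have hf := fun w l p => (gapParsings_finite l [] p [] W).image (List.cons w)
  rw [afterXVal, gapVal, gapParsings_afterX_cons_X, setVal_union _ (hf _ _ _)
      ((hf _ _ _).union (hf _ _ _)), setVal_union _ (hf _ _ _) (hf _ _ _)]
  · have hXAA : parseVal tightCoeff [[.X, .A, .A]] = Polynomial.X := by
      simp [parseVal, tightCoeff, wordWt]
    have hXXA : parseVal tightCoeff [[.X, .X, .A]] = -Polynomial.X := by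
      simp [parseVal, tightCoeff, wordWt]
    simp only [setVal_image_cons _ (gapParsings_finite _ _ _ _ _), afterXVal, gapVal,
      parseVal_X, hXAA, hXXA]
    ring
  all_goals
    rw [Set.disjoint_left]
    simp

theorem afterXVal_cons_X_X (W : PWord) :
    afterXVal (.X :: .X :: W) = afterXVal (.X :: W) - Polynomial.X * gapVal [] [] [.A] [] W := by
  rw [afterXVal_cons_X, gapVal_cons_cons_of_ne (by simp), gapVal_cons_cons]
  ring

theorem afterXVal_cons_X_X_X (W : PWord) :
    afterXVal (.X :: .X :: .X :: W) = afterXVal (.X :: .X :: W) := by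
  rw [afterXVal_cons_X_X, gapVal_cons_cons_of_ne (by simp), mul_zero, sub_zero]

theorem afterXVal_concat_X (W : PWord) : afterXVal (W ++ [.X]) = afterXVal W := by
  have hset : gapParsings [[.X]] [] [] [] (W ++ [.X]) =
      (· ++ [[.X]]) '' gapParsings [[.X]] [] [] [.X] (W ++ [.X]) := by
    ext L
    constructor
    · intro hL
      obtain ⟨hT, hflat⟩ := mem_gapParsings_afterX.1 hL
      have hlast : L.getLast? = some [.X] := by
        rw [← getLast?_flatten_eq_X_iff (tightChain_cons.1 hT).2.2.1, hflat, List.getLast?_concat]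
      obtain ⟨M, rfl⟩ := List.getLast?_eq_some_iff.1 hlast
      exact ⟨M, concat_X_mem_gapParsings_iff.1 hL, rfl⟩
    · rintro ⟨M, hM, rfl⟩
      exact concat_X_mem_gapParsings_iff.2 hM
  have hcancel : gapParsings [[.X]] [] [] [.X] (W ++ [.X]) = gapParsings [[.X]] [] [] [] W := by
    simp [gapParsings]
  rw [afterXVal, gapVal, hset, hcancel, setVal_image_concat _ (gapParsings_finite _ _ _ _ _),
    parseVal_X, one_mul, afterXVal, gapVal]

end AfterX

section Core

theorem exists_eq_replicate_append_dropWhile {α : Type*} [BEq α] [LawfulBEq α] (a : α)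
    (s : List α) : ∃ k, s = List.replicate k a ++ s.dropWhile (· == a) := by
  have htake : s.takeWhile (· == a) = List.replicate (s.takeWhile (· == a)).length a :=
    List.eq_replicate_of_mem fun b hb => by simpa using List.mem_takeWhile_imp hb
  exact ⟨_, by rw [← htake, List.takeWhile_append_dropWhile]⟩

theorem apply_replicate_append {α β : Type*} {a : α} {f : List α → β}
    (hcons : ∀ s, f (a :: s) = f s) (k : ℕ) (s : List α) :
    f (List.replicate k a ++ s) = f s := by
  induction k with
  | zero => rfl
  | succ k ih => rw [List.replicate_succ, List.cons_append, hcons, ih]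

theorem core_eq_rdropWhile (s : PWord) :
    core s = (s.dropWhile (· == PLetter.X)).rdropWhile (· == PLetter.X) := rfl

theorem core_cons_X (s : PWord) : core (.X :: s) = core s := by
  simp [core]

theorem core_concat_X (s : PWord) : core (s ++ [.X]) = core s := by
  rw [core_eq_rdropWhile, core_eq_rdropWhile, List.dropWhile_append]
  split_ifs with h
  · simp [List.isEmpty_iff.1 h]
  · rw [List.rdropWhile_concat_pos _ _ _ (by simp)]

theorem apply_core {β : Type*} (f : PWord → β) (hcons : ∀ s, f (.X :: s) = f s)
    (hconcat : ∀ s, f (s ++ [.X]) = f s) (s : PWord) : f (core s) = f s := by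
  have hdrop : ∀ s : PWord, f (s.dropWhile (· == .X)) = f s := by
    intro s
    obtain ⟨k, hk⟩ := exists_eq_replicate_append_dropWhile .X s
    conv_rhs => rw [hk, apply_replicate_append hcons]
  have hrdrop : ∀ s : PWord, f (s.rdropWhile (· == .X)) = f s := by
    intro s
    induction s using List.reverseRecOn with
    | nil => rfl
    | append_singleton s y ih =>
      by_cases hy : y = .X
      · rw [hy, List.rdropWhile_concat_pos _ _ _ (by simp), ih, hconcat]
      · rw [List.rdropWhile_concat_neg _ _ _ (by simpa using hy)]
  rw [core_eq_rdropWhile, hrdrop, hdrop]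

theorem core_core (s : PWord) : core (core s) = core s :=
  apply_core core core_cons_X core_concat_X s

theorem getLast?_core_ne_X (s : PWord) : (core s).getLast? ≠ some .X := by
  intro h
  have hne : core s ≠ [] := by
    intro hnil
    simp [hnil] at h
  rw [List.getLast?_eq_some_getLast hne, Option.some_inj] at h
  exact List.rdropWhile_last_not (· == PLetter.X) (s.dropWhile (· == PLetter.X)) hne
    (beq_iff_eq.2 h)

theorem length_core_le (s : PWord) : (core s).length ≤ s.length :=
  (List.rdropWhile_prefix (· == PLetter.X) _).length_le.trans
    (List.dropWhile_suffix (· == PLetter.X)).length_le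

theorem core_eq_dropWhile {s : PWord} (h : s.getLast? ≠ some .X) :
    core s = s.dropWhile (· == PLetter.X) := by
  rw [core_eq_rdropWhile, List.rdropWhile_eq_self_iff]
  intro hne hX
  obtain ⟨r, hr⟩ := List.dropWhile_suffix (l := s) (· == PLetter.X)
  apply h
  rw [← hr, List.getLast?_append, List.getLast?_eq_some_getLast hne]
  simpa using hX

end Core

section Open

theorem exists_replicate_append_eq_of_ne_X : ∀ w ∈ tightWords, w ≠ [.X] →
    w.dropWhile (· == .X) ≠ [] ∧
      ∃ k < 3, List.replicate k .X ++ w = .X :: .X :: w.dropWhile (· == .X) := by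
  -- The bound on `k` makes the claim decidable.
  decide

theorem _root_.IsOpenParsing.exists_replicate_append_flatten_eq {W : PWord} {L : List PWord}
    (hL : IsOpenParsing W L) : ∃ k, List.replicate k .X ++ L.flatten = .X :: .X :: core W := by
  obtain ⟨hT, hcore, hends⟩ := hL
  rw [← hcore]
  cases L with
  | nil => exact ⟨2, rfl⟩
  | cons w M =>
    obtain ⟨hX, -, -, hlast⟩ := hends (by simp)
    have hflat : (w :: M).flatten.getLast? ≠ some .X := by
      rwa [Ne, getLast?_flatten_eq_X_iff hT.1, List.getLast?_eq_some_getLast (by simp),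
        Option.some_inj]
    obtain ⟨hne, k, -, hk⟩ := exists_replicate_append_eq_of_ne_X w (hT.1 w (by simp)) hX
    refine ⟨k, ?_⟩
    rw [core_eq_dropWhile hflat, List.flatten_cons, List.dropWhile_append,
      if_neg (by simpa using hne), ← List.append_assoc, hk]
    rfl

theorem _root_.IsOpenParsing.length_lt {W : PWord} {L : List PWord} (hL : IsOpenParsing W L) :
    L.length < W.length + 3 := by
  obtain ⟨k, hk⟩ := hL.exists_replicate_append_flatten_eq
  have hflat := congrArg List.length hk
  simp only [List.length_append, List.length_replicate, List.length_cons] at hflat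
  have hlen := length_le_length_flatten fun w hw => ne_nil_of_mem_tightWords w (hL.1.1 w hw)
  have hcore := length_core_le W
  lia

theorem getLast?_ne_X_of_replicate_append_eq {k : ℕ} {s W : PWord}
    (h : List.replicate k .X ++ s = .X :: .X :: core W) (hA : .A ∈ s) :
    s.getLast? ≠ some .X := by
  intro hX
  have hcore : core W ≠ [] := by
    have hmem : PLetter.A ∈ PLetter.X :: .X :: core W := h ▸ List.mem_append_right _ hA
    exact List.ne_nil_of_mem (a := .A) (by simpa using hmem)
  have hlast := congrArg List.getLast? h
  rw [List.getLast?_append, hX, ← List.singleton_append, List.getLast?_append,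
    ← List.singleton_append, List.getLast?_append, List.getLast?_eq_some_getLast hcore] at hlast
  apply getLast?_core_ne_X W
  rw [List.getLast?_eq_some_getLast hcore]
  simpa using hlast.symm

theorem isOpenParsing_dropWhile {W : PWord} {L : List PWord}
    (hL : L ∈ gapParsings [[.X]] [] [] [] (.X :: .X :: core W)) :
    IsOpenParsing W (L.dropWhile (· == [.X])) := by
  obtain ⟨hT, hflat⟩ := mem_gapParsings_afterX.1 hL
  obtain ⟨k, hk⟩ := exists_eq_replicate_append_dropWhile [.X] L
  set D := L.dropWhile (· == [.X])
  have hflat' : List.replicate k .X ++ D.flatten = .X :: .X :: core W := by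
    rw [← hflat, hk]
    simp
  rw [hk, tightChain_X_replicate_append, tightChain_cons] at hT
  obtain ⟨-, hbad, hT⟩ := hT
  refine ⟨hT, ?_, fun hne => ?_⟩
  · rw [← apply_replicate_append core_cons_X k, hflat', core_cons_X, core_cons_X, core_core]
  have hhead : D.head hne ≠ [.X] := by
    simpa using List.head_dropWhile_not (· == [PLetter.X]) hne
  have hbad_head : ¬ Bad [.X] (D.head hne) := hbad _ (List.head_mem_head? hne)
  simp only [Bad, true_and, not_or] at hbad_head
  have hA : PLetter.A ∈ D.flatten := List.mem_flatten.2 ⟨_, List.head_mem hne,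
    List.mem_of_getLast? (getLast?_of_mem_tightWords _ (hT.1 _ (List.head_mem hne)) hhead)⟩
  refine ⟨hhead, hbad_head.1, hbad_head.2, fun hlast => ?_⟩
  apply getLast?_ne_X_of_replicate_append_eq hflat' hA
  rw [getLast?_flatten_eq_X_iff hT.1, List.getLast?_eq_some_getLast hne, hlast]

theorem bijOn_dropWhile (W : PWord) :
    Set.BijOn (List.dropWhile (· == [.X]))
      (gapParsings [[.X]] [] [] [] (.X :: .X :: core W)) {L | IsOpenParsing W L} := by
  refine ⟨fun L => isOpenParsing_dropWhile, ?_, ?_⟩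
  · intro L hL M hM hLM
    obtain ⟨i, hi⟩ := exists_eq_replicate_append_dropWhile [.X] L
    obtain ⟨j, hj⟩ := exists_eq_replicate_append_dropWhile [.X] M
    have hflat : L.flatten = M.flatten :=
      (mem_gapParsings_afterX.1 hL).2.trans (mem_gapParsings_afterX.1 hM).2.symm
    have hij : i = j := by
      rw [hi, hj, hLM] at hflat
      simpa using congrArg List.length hflat
    rw [hi, hj, hLM, hij]
  · intro L hL
    obtain ⟨k, hk⟩ := hL.exists_replicate_append_flatten_eq
    refine ⟨List.replicate k [.X] ++ L, ?_, ?_⟩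
    · rw [mem_gapParsings_afterX, tightChain_X_replicate_append, tightChain_cons]
      refine ⟨⟨by decide, fun v hv => ?_, hL.1⟩, by simpa using hk⟩
      obtain ⟨M, rfl⟩ := List.head?_eq_some_iff.1 hv
      obtain ⟨-, hXA, hBA, -⟩ := hL.2.2 (by simp)
      exact fun hbad => hbad.2.elim hXA hBA
    · rw [List.dropWhile_append_of_pos (by simp [List.mem_replicate])]
      cases L with
      | nil => rfl
      | cons w M =>
        have hw : w ≠ [.X] := (hL.2.2 (by simp)).1
        simp [hw]

theorem openVal_eq_afterXVal (W : PWord) : openVal W = afterXVal (.X :: .X :: W) := by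
  have hpad : afterXVal (.X :: .X :: core W) = afterXVal (.X :: .X :: W) :=
    apply_core (fun s => afterXVal (.X :: .X :: s)) (fun s => afterXVal_cons_X_X_X s)
      (fun s => afterXVal_concat_X (.X :: .X :: s)) W
  rw [← hpad, openVal, sum_ite_eq_finsum_mem _ fun L hL => ⟨hL.1.1, hL.length_lt⟩]
  refine (finsum_mem_eq_of_bijOn _ (bijOn_dropWhile W) fun L _ => ?_).symm
  obtain ⟨k, hk⟩ := exists_eq_replicate_append_dropWhile [.X] L
  conv_lhs => rw [hk, parseVal_append, parseVal_replicate_X, one_mul]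

end Open

section Cyclic

theorem tightChain_cons_concat_iff {w : PWord} {M : List PWord} :
    TightChain (w :: (M ++ [w])) ↔
      TightChain (M ++ [w]) ∧ ¬ Bad w ((M ++ [w]).head (by simp)) := by
  rw [tightChain_cons, List.head?_eq_some_head (by simp)]
  simp only [Option.mem_some_iff, forall_eq']
  exact ⟨fun h => ⟨h.2.2, h.2.1⟩, fun h => ⟨h.1.1 w (by simp), h.2, h.1⟩⟩

theorem isCyclicParsing_concat_iff {W : PWord} {y : PLetter} {r : ℕ} {L : List PWord} :
    IsCyclicParsing (W ++ [y]) r L ∧ r < W.length + 1 ↔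
      ∃ s p M, M ∈ gapParsings [s ++ y :: p] [s ++ y :: p] p s W ∧
        r = p.length ∧ L = M ++ [s ++ y :: p] := by
  constructor
  · rintro ⟨⟨hT, hne, hflat, hr, hbad⟩, hrW⟩
    obtain ⟨M, w, rfl⟩ := L.eq_nil_or_concat'.resolve_left hne
    rw [List.getLast_append_singleton] at hr hbad
    have hrot : M.flatten ++ w = W.drop r ++ y :: W.take r := by
      rw [List.rotate_eq_drop_append_take (by grind), List.drop_append_of_le_length (by lia),
        List.take_append_of_le_length (by lia)] at hflat
      simpa using hflat
    obtain ⟨s, rfl⟩ : y :: W.take r <:+ w :=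
      List.suffix_of_suffix_length_le ⟨_, rfl⟩ ⟨_, hrot⟩ (by grind)
    have hs : M.flatten ++ s = W.drop r := by
      rwa [← List.append_assoc, List.append_left_inj] at hrot
    refine ⟨s, W.take r, M, ⟨?_, ?_⟩, (List.length_take_of_le (by lia)).symm, rfl⟩
    · exact tightChain_cons_concat_iff.2 ⟨hT, hbad⟩
    · rw [List.append_assoc, hs, List.take_append_drop]
  · rintro ⟨s, p, M, ⟨hT, rfl⟩, rfl, rfl⟩
    obtain ⟨hT, hbad⟩ := tightChain_cons_concat_iff.1 hT
    refine ⟨⟨hT, by simp, ?_, by grind, by simpa using hbad⟩, by simp⟩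
    simp only [List.append_assoc, List.rotate_append_length_eq]
    simp

theorem _root_.IsCyclicParsing.length_flatten {W : PWord} {r : ℕ} {L : List PWord}
    (hL : IsCyclicParsing W r L) : L.flatten.length = W.length := by
  obtain ⟨-, -, hflat, -⟩ := hL
  rw [hflat, List.length_rotate]

theorem finite_setOf_isCyclicParsing (W : PWord) (r : ℕ) : {L | IsCyclicParsing W r L}.Finite :=
  (finite_setOf_length_flatten_le W.length).subset fun _ hL => ⟨hL.1.1, hL.length_flatten.le⟩

theorem cycVal_eq_sum (W : PWord) :
    cycVal W = ∑ r ∈ Finset.range W.length, setVal {L | IsCyclicParsing W r L} := by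
  refine Finset.sum_congr rfl fun r _ => sum_ite_eq_finsum_mem _ fun L hL => ⟨hL.1.1, ?_⟩
  have hlen := length_le_length_flatten fun w hw => ne_nil_of_mem_tightWords w (hL.1.1 w hw)
  exact Nat.lt_succ_of_le (hlen.trans hL.length_flatten.le)

/-- The occurrences of the letter `y` in the tight words, as pairs of the part of the word before
`y` and the part after `y`. -/
def occurrences (y : PLetter) : Finset (PWord × PWord) :=
  (tightWords.flatMap fun w => (List.range w.length).map fun i =>
    (w.take i, w.drop (i + 1))).toFinset.filter fun q => q.1 ++ y :: q.2 ∈ tightWords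

theorem mem_occurrences {y : PLetter} {s p : PWord} :
    (s, p) ∈ occurrences y ↔ s ++ y :: p ∈ tightWords := by
  simp only [occurrences, Finset.mem_filter, List.mem_toFinset, and_iff_right_iff_imp]
  intro hw
  refine List.mem_flatMap.2 ⟨_, hw, List.mem_map.2 ⟨s.length, by simp, ?_⟩⟩
  simp

theorem occurrences_X : occurrences .X = {([], []), ([], [.A]), ([], [.A, .A]), ([.A], [.A]),
    ([], [.X, .A]), ([.X], [.A])} := by
  decide

theorem occurrences_B : occurrences .B = {([], [.A]), ([.A], [.A])} := by
  decide

theorem bijOn_isCyclicParsing_concat (W : PWord) (y : PLetter) :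
    Set.BijOn (fun x : (PWord × PWord) × List PWord => (x.1.2.length, x.2))
      {x | x.1 ∈ occurrences y ∧ x.2 ∈ (· ++ [x.1.1 ++ y :: x.1.2]) ''
        gapParsings [x.1.1 ++ y :: x.1.2] [x.1.1 ++ y :: x.1.2] x.1.2 x.1.1 W}
      {x | x.1 ∈ Finset.range (W ++ [y]).length ∧ IsCyclicParsing (W ++ [y]) x.1 x.2} := by
  refine ⟨?_, ?_, ?_⟩
  · rintro ⟨⟨s, p⟩, L⟩ ⟨-, M, hM, hL⟩
    obtain rfl : M ++ [s ++ y :: p] = L := hL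
    obtain ⟨hL, hr⟩ := isCyclicParsing_concat_iff.2 ⟨s, p, M, hM, rfl, rfl⟩
    exact ⟨by simpa using hr, hL⟩
  · rintro ⟨⟨s, p⟩, L⟩ ⟨-, M, -, hM⟩ ⟨⟨s', p'⟩, L'⟩ ⟨-, M', -, hM'⟩ h
    obtain ⟨hlen, hL⟩ := Prod.mk.inj h
    have happend : M ++ [s ++ y :: p] = M' ++ [s' ++ y :: p'] := hM.trans (hL.trans hM'.symm)
    have hw := List.singleton_inj.1 (List.append_inj' happend rfl).2
    obtain ⟨hs, hp⟩ := List.append_inj' hw (congrArg (· + 1) hlen)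
    exact Prod.ext (Prod.ext hs (List.cons.inj hp).2) hL
  · rintro ⟨r, L⟩ ⟨hr, hL⟩
    obtain ⟨s, p, M, hM, rfl, rfl⟩ := isCyclicParsing_concat_iff.1 ⟨hL, by simpa using hr⟩
    exact ⟨((s, p), _), ⟨mem_occurrences.2 (hM.1.1 _ (by simp)), M, hM, rfl⟩, rfl⟩

theorem cycVal_concat (W : PWord) (y : PLetter) :
    cycVal (W ++ [y]) = ∑ q ∈ occurrences y, parseVal tightCoeff [q.1 ++ y :: q.2] *
      gapVal [q.1 ++ y :: q.2] [q.1 ++ y :: q.2] q.2 q.1 W := by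
  have hgap := fun q : PWord × PWord =>
    gapParsings_finite [q.1 ++ y :: q.2] [q.1 ++ y :: q.2] q.2 q.1 W
  rw [cycVal_eq_sum, sum_setVal _ (finite_setOf_isCyclicParsing _)]
  simp only [gapVal, ← setVal_image_concat _ (hgap _)]
  rw [sum_setVal _ fun q => (hgap q).image _]
  exact (finsum_mem_eq_of_bijOn _ (bijOn_isCyclicParsing_concat W y) fun _ _ => rfl).symm

theorem parseVal_mul_gapVal_of_length_eq_three {w : PWord} (hw : w ∈ tightWords)
    (hlen : w.length = 3) (p s W : PWord) :
    parseVal tightCoeff [w] * gapVal [w] [w] p s W =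
      Polynomial.C (tightCoeff w) * Polynomial.X * gapVal [] [] p s W := by
  have hX : w ≠ [.X] := by
    rintro rfl
    simp at hlen
  have hbad : ∀ u, ¬ Bad u w := by
    rintro u ⟨-, rfl | rfl⟩ <;> simp at hlen
  rw [gapVal_left_eq_nil hw hX, gapVal_right_eq_nil hw hbad]
  simp [parseVal, wordWt, hX]

theorem parseVal_mul_gapVal_XA (W : PWord) :
    parseVal tightCoeff [[.X, .A]] * gapVal [[.X, .A]] [[.X, .A]] [.A] [] W =
      Polynomial.X * gapVal [] [[.X, .A]] [.A] [] W := by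
  rw [gapVal_left_eq_nil (by decide) (by simp)]
  simp [parseVal, tightCoeff, wordWt]

theorem parseVal_mul_gapVal_BA (W : PWord) :
    parseVal tightCoeff [[.B, .A]] * gapVal [[.B, .A]] [[.B, .A]] [.A] [] W =
      -(Polynomial.X * gapVal [] [[.X, .A]] [.A] [] W) := by
  rw [gapVal_left_eq_nil (by decide) (by simp), gapVal_right_BA]
  simp [parseVal, tightCoeff, wordWt]

theorem cycVal_concat_X (W : PWord) :
    cycVal (W ++ [.X]) = afterXVal W + Polynomial.X * gapVal [] [[.X, .A]] [.A] [] W +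
      Polynomial.X * gapVal [] [] [.A, .A] [] W +
      2 * Polynomial.X * gapVal [] [] [.A] [.A] W -
      Polynomial.X * gapVal [] [] [.X, .A] [] W - Polynomial.X * gapVal [] [] [.A] [.X] W := by
  have hX : parseVal tightCoeff [[.X]] * gapVal [[.X]] [[.X]] [] [] W = afterXVal W := by
    rw [parseVal_X, one_mul, gapVal_right_eq_nil (by decide) not_bad_X, afterXVal]
  have hXAA : tightCoeff [.X, .A, .A] = 1 := by simp [tightCoeff]
  have hAXA : tightCoeff [.A, .X, .A] = 2 := by simp [tightCoeff]
  have hXXA : tightCoeff [.X, .X, .A] = -1 := by simp [tightCoeff]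
  have hlong := fun w hw hlen p s =>
    parseVal_mul_gapVal_of_length_eq_three (w := w) hw hlen p s W
  rw [cycVal_concat, occurrences_X, Finset.sum_insert (by simp), Finset.sum_insert (by simp),
    Finset.sum_insert (by simp), Finset.sum_insert (by simp), Finset.sum_insert (by simp),
    Finset.sum_singleton]
  simp only [List.nil_append, List.cons_append, hX, parseVal_mul_gapVal_XA,
    hlong [.X, .A, .A] (by decide) rfl, hlong [.A, .X, .A] (by decide) rfl,
    hlong [.X, .X, .A] (by decide) rfl, hXAA, hAXA, hXXA, map_one, map_neg, map_ofNat]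
  ring

theorem cycVal_concat_B (W : PWord) :
    cycVal (W ++ [.B]) = -(Polynomial.X * gapVal [] [[.X, .A]] [.A] [] W) -
      Polynomial.X * gapVal [] [] [.A] [.A] W := by
  have hABA : tightCoeff [.A, .B, .A] = -1 := by simp [tightCoeff]
  rw [cycVal_concat, occurrences_B, Finset.sum_insert (by simp), Finset.sum_singleton]
  simp only [List.nil_append, List.cons_append, parseVal_mul_gapVal_BA,
    parseVal_mul_gapVal_of_length_eq_three (w := [.A, .B, .A]) (by decide) rfl, hABA, map_neg,
    map_one]
  ring

theorem cycVal_concat_X_add_two_mul_cycVal_concat_B (W : PWord) :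
    cycVal (W ++ [.X]) + 2 * cycVal (W ++ [.B]) = afterXVal (.X :: .X :: W) := by
  rw [cycVal_concat_X, cycVal_concat_B, afterXVal_cons_X_X, afterXVal_cons_X,
    gapVal_nil_nil [.A] [] W]
  ring

end Cyclic

end TightPuzzle

open TightPuzzle in
theorem main_identity_easy_case_general (W : PWord) :
    cycVal (W ++ [.X]) + 2 * cycVal (W ++ [.B]) - openVal W = 0 := by
  rw [cycVal_concat_X_add_two_mul_cycVal_concat_B, openVal_eq_afterXVal, sub_self]

open PLetter in
/-- **Main cyclic identity, first case.**  If `W` does not both start with the letter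
`A` and end with the letter `A`, then `|(WX)| + 2|(WB)| - |W| = 0`. -/
theorem main_identity_easy_case (W : PWord)
    (hW : ¬ (W.head? = some A ∧ W.getLast? = some A)) :
    cycVal (W ++ [X]) + 2 * cycVal (W ++ [B]) - openVal W = 0 :=
  main_identity_easy_case_general W
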